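/- arXiv:1411.1943 — 8 statements merged into one kernel-verified Lean document; each statement's English description precedes it below -/
import Mathlib

section
/- Let m ≥ 3 be a natural number, let h be a positive definite real m×m matrix, let v, w ∈ ℝ^m and c ∈ ℝ. If v_i * v_j + w_i * w_j = c * h_{i j} for all indices i, j, then v = 0, w = 0 and c = 0. -/
/-!
The matrix with entries `v_i v_j + w_i w_j` is the Gram matrix `Aᵀ * A`, where `A` has the two rows
`v` and `w`, so its rank is at most `2`, while `c • h` has the rank of `h` unless `c = 0`. Once
`c = 0`, the diagonal of `Aᵀ * A = 0` says that every column of `A` has zero sum of squares.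
-/

open Matrix

theorem eq_zero_of_mul_eq_smul_of_card_lt_rank {R l m n : Type*} [CommRing R] [IsDomain R]
    [Fintype m] [Fintype n] {A : Matrix l m R} {B : Matrix m n R} {M : Matrix l n R} {c : R}
    (hM : Fintype.card m < M.rank) (hAB : A * B = c • M) : c = 0 := by
  by_contra hc
  refine hM.not_ge ?_
  calc M.rank = (c • M).rank :=
        (rank_smul_of_mem_nonZeroDivisors M (mem_nonZeroDivisors_of_ne_zero hc)).symm
    _ = (A * B).rank := by rw [hAB]
    _ ≤ A.rank := rank_mul_le_left A B
    _ ≤ Fintype.card m := rank_le_card_width A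

section LinearOrderedRing

variable {R m n : Type*} [Fintype m] [LinearOrder R]

theorem eq_zero_of_transpose_mul_self_eq_zero [Ring R] [IsStrictOrderedRing R]
    {A : Matrix m n R} (hA : Aᵀ * A = 0) : A = 0 := by
  ext i j
  have hcol : A.col j = 0 := dotProduct_self_eq_zero.mp (congrFun₂ hA j j)
  exact congrFun hcol i

variable [CommRing R] [IsStrictOrderedRing R] [Fintype n]

theorem eq_zero_of_transpose_mul_self_eq_smul_of_card_lt_rank {A : Matrix m n R}
    {M : Matrix n n R} {c : R} (hM : Fintype.card m < M.rank) (hA : Aᵀ * A = c • M) :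
    A = 0 ∧ c = 0 := by
  have hc : c = 0 := eq_zero_of_mul_eq_smul_of_card_lt_rank hM hA
  rw [hc, zero_smul] at hA
  exact ⟨eq_zero_of_transpose_mul_self_eq_zero hA, hc⟩

theorem rank_two_eq_smul_posDef_general {h : Matrix n n R} (hrank : 3 ≤ h.rank)
    {v w : n → R} {c : R} (hvw : ∀ i j, v i * v j + w i * w j = c * h i j) :
    v = 0 ∧ w = 0 ∧ c = 0 := by
  have hgram : (of ![v, w])ᵀ * of ![v, w] = c • h := by
    ext i j
    simpa [mul_apply] using hvw i j
  have hcard : Fintype.card (Fin 2) < h.rank := by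
    rwa [Fintype.card_fin]
  obtain ⟨hrows, hc⟩ := eq_zero_of_transpose_mul_self_eq_smul_of_card_lt_rank hcard hgram
  exact ⟨congrFun hrows 0, congrFun hrows 1, hc⟩

end LinearOrderedRing

/-- A sum of two rank-one matrices `v_i v_j + w_i w_j` can equal a multiple
`c • h` of a positive definite matrix `h` in dimension `m ≥ 3` only trivially:
`v = 0`, `w = 0` and `c = 0`. -/
theorem rank_two_eq_smul_posDef (m : ℕ) (hm : 3 ≤ m)
    (h : Matrix (Fin m) (Fin m) ℝ) (hpd : h.PosDef)
    (v w : Fin m → ℝ) (c : ℝ)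
    (hvw : ∀ i j : Fin m, v i * v j + w i * w j = c * h i j) :
    v = 0 ∧ w = 0 ∧ c = 0 := by
  have hrank : h.rank = m := by rw [rank_of_isUnit h hpd.isUnit, Fintype.card_fin]
  exact rank_two_eq_smul_posDef_general (hm.trans_eq hrank.symm) hvw
end

section
/- Let m be a natural number, let B be a nonzero real antisymmetric m×m matrix (Bᵀ = −B) and c ∈ ℝ with B * Bᵀ = c • 1 (c times the identity matrix). Then c > 0, m is even, and the matrix J := (Real.sqrt c)⁻¹ • B satisfies J * Jᵀ = 1 and J * J = −1 (i.e. J is orthogonal and is a complex structure). -/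
open Matrix

theorem pos_of_mul_transpose_eq_smul_one {m n R : Type*} [Fintype n] [DecidableEq m]
    [Ring R] [LinearOrder R] [IsStrictOrderedRing R] {A : Matrix m n R} {c : R} (hA : A ≠ 0)
    (h : A * Aᵀ = c • (1 : Matrix m m R)) : 0 < c := by
  obtain ⟨i, hi⟩ : ∃ i, A i ≠ 0 := Function.ne_iff.mp hA
  have row_dotProduct_self : A i ⬝ᵥ A i = c := by
    simpa [mul_apply'] using congrFun₂ h i i
  have dotProduct_self_nonneg : 0 ≤ A i ⬝ᵥ A i :=
    Finset.sum_nonneg fun j _ ↦ mul_self_nonneg (A i j)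
  rw [← row_dotProduct_self]
  exact dotProduct_self_nonneg.lt_of_ne' (dotProduct_self_eq_zero.not.mpr hi)

theorem inv_sqrt_smul_mul_transpose_eq_one {m n : Type*} [Fintype n] [DecidableEq m]
    {A : Matrix m n ℝ} {c : ℝ} (hc : 0 < c) (h : A * Aᵀ = c • (1 : Matrix m m ℝ)) :
    ((Real.sqrt c)⁻¹ • A) * ((Real.sqrt c)⁻¹ • A)ᵀ = 1 := by
  calc ((Real.sqrt c)⁻¹ • A) * ((Real.sqrt c)⁻¹ • A)ᵀ
      = ((Real.sqrt c)⁻¹ * (Real.sqrt c)⁻¹) • (A * Aᵀ) := by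
        rw [transpose_smul, Matrix.smul_mul, Matrix.mul_smul, smul_smul]
    _ = (c⁻¹ * c) • 1 := by
        rw [h, smul_smul, ← mul_inv, Real.mul_self_sqrt hc.le]
    _ = 1 := by rw [inv_mul_cancel₀ hc.ne', one_smul]

theorem even_card_of_mul_self_eq_neg_one {n R : Type*} [Fintype n] [DecidableEq n]
    [CommRing R] {J : Matrix n n R} (hR : ¬IsSquare (-1 : R)) (hJ : J * J = -1) :
    Even (Fintype.card n) := by
  have det_mul_self : J.det * J.det = (-1) ^ Fintype.card n := by
    rw [← det_mul, hJ, det_neg, det_one, mul_one]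
  by_contra hn
  rw [(Nat.not_even_iff_odd.mp hn).neg_one_pow] at det_mul_self
  exact hR ⟨J.det, det_mul_self.symm⟩

theorem mul_self_eq_neg_one_of_transpose_eq_neg {n R : Type*} [Fintype n] [DecidableEq n]
    [NonAssocRing R] {J : Matrix n n R} (hskew : Jᵀ = -J) (horth : J * Jᵀ = 1) : J * J = -1 := by
  rw [← horth, hskew, mul_neg, neg_neg]

theorem antisymm_mul_transpose_smul_one_complex_structure_general {n : Type*} [Fintype n]
    [DecidableEq n] {B : Matrix n n ℝ} {c : ℝ} (hB0 : B ≠ 0) (hB : Bᵀ = -B)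
    (h : B * Bᵀ = c • (1 : Matrix n n ℝ)) :
    0 < c ∧ Even (Fintype.card n) ∧
      ((Real.sqrt c)⁻¹ • B) * ((Real.sqrt c)⁻¹ • B)ᵀ = 1 ∧
      ((Real.sqrt c)⁻¹ • B) * ((Real.sqrt c)⁻¹ • B) = -1 := by
  have hc : 0 < c := pos_of_mul_transpose_eq_smul_one hB0 h
  have horth := inv_sqrt_smul_mul_transpose_eq_one hc h
  have hskew : ((Real.sqrt c)⁻¹ • B)ᵀ = -((Real.sqrt c)⁻¹ • B) := by
    rw [transpose_smul, hB, smul_neg]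
  have hsq := mul_self_eq_neg_one_of_transpose_eq_neg hskew horth
  have neg_one_not_isSquare : ¬IsSquare (-1 : ℝ) := not_isSquare_of_neg neg_one_lt_zero
  exact ⟨hc, even_card_of_mul_self_eq_neg_one neg_one_not_isSquare hsq, horth, hsq⟩

/-- A nonzero antisymmetric real matrix `B` with `B * Bᵀ = c • 1` forces `c > 0`,
an even dimension `m`, and `J := (√c)⁻¹ • B` is an orthogonal complex structure:
`J * Jᵀ = 1` and `J * J = -1`. -/
theorem antisymm_mul_transpose_smul_one_complex_structure (m : ℕ)
    (B : Matrix (Fin m) (Fin m) ℝ) (c : ℝ)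
    (hB0 : B ≠ 0) (hB : Bᵀ = -B)
    (h : B * Bᵀ = c • (1 : Matrix (Fin m) (Fin m) ℝ)) :
    0 < c ∧ Even m ∧
      ((Real.sqrt c)⁻¹ • B) * ((Real.sqrt c)⁻¹ • B)ᵀ = 1 ∧
      ((Real.sqrt c)⁻¹ • B) * ((Real.sqrt c)⁻¹ • B) = -1 := by
  simpa only [Fintype.card_fin] using
    antisymm_mul_transpose_smul_one_complex_structure_general hB0 hB h
end

section
/- Let m ≥ 2 be a natural number and let b be a real-valued alternating multilinear map in m−1 arguments on EuclideanSpace ℝ (Fin m). Let e_i denote the standard orthonormal basis vectors. Suppose there exists c ∈ ℝ such that for all i, j ∈ Fin m, the contraction ∑_{k : Fin (m−2) → Fin m} b(e_i, e_{k(0)}, …, e_{k(m−3)}) * b(e_j, e_{k(0)}, …, e_{k(m−3)}) equals c * δ_{ij} (Kronecker delta). Then b = 0 and c = 0. -/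
/-- The tuple of arguments `(e i, e (k 0), …, e (k (m-3)))` fed to an
alternating map in `m - 1` arguments: the first slot is `e i`, the remaining
`m - 2` slots are `e (k t)`. -/
noncomputable def insArgs (m : ℕ) (e : Fin m → EuclideanSpace ℝ (Fin m))
    (i : Fin m) (k : Fin (m - 2) → Fin m) :
    Fin (m - 1) → EuclideanSpace ℝ (Fin m) :=
  fun t => if ht : (t : ℕ) = 0 then e i
    else e (k ⟨(t : ℕ) - 1, by have := t.isLt; omega⟩)

/-!
An alternating form `b` of degree one less than the dimension is always degenerate: some nonzero
vector `v` satisfies `b (v, …) = 0`. Indeed, if `b w ≠ 0`, then `w` spans a hyperplane, and a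
vector outside it can be corrected by an element of the hyperplane, as in Cramer's rule, so that
putting it into any slot of `w` gives `0`. The coordinates of `v` form a null vector of the
contraction matrix, which therefore has determinant `0`. If that matrix is `c • 1`, then `c = 0`,
so its diagonal entries, which are sums of squares of the components of `b`, vanish.
-/

open Matrix Module

lemma curryLeft_apply_comp_eq_zero {R M N : Type*} [CommSemiring R] [AddCommMonoid M] [Module R M]
    [AddCommGroup N] [Module R N] {n : ℕ} (f : M [⋀^Fin (n + 1)]→ₗ[R] N)
    {w : Fin (n + 1) → M} {x : M} (hx : ∀ j, f (Function.update w j x) = 0)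
    (k : Fin n → Fin (n + 1)) : f.curryLeft x (w ∘ k) = 0 := by
  by_cases hk : Function.Injective k
  · have hk_surj : ¬ Function.Surjective k := fun h => by
      simpa using Fintype.card_le_of_surjective k h
    obtain ⟨j, hj⟩ : ∃ j, j ∉ Set.range k := not_forall.1 hk_surj
    let σ : Equiv.Perm (Fin (n + 1)) := Equiv.ofBijective (Fin.cons j k)
      (Finite.injective_iff_bijective.1 (Fin.cons_injective_iff.2 ⟨hj, hk⟩))
    have hσ : vecCons x (w ∘ k) = Function.update w j x ∘ σ := by
      change Fin.cons x (w ∘ k) = Function.update w j x ∘ Fin.cons j k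
      rw [Fin.comp_cons, Function.update_self, Function.update_comp_eq_of_notMem_range _ _ hj]
    rw [AlternatingMap.curryLeft_apply_apply, hσ, f.map_perm, hx, smul_zero]
  · exact (f.curryLeft x).map_eq_zero_of_not_injective _ fun h => hk h.of_comp

section Kernel

variable {K V : Type*} [Field K] [AddCommGroup V] [Module K V]

lemma exists_mem_span_map_update_sub_eq_zero {ι : Type*} [Finite ι] [DecidableEq ι]
    (f : V [⋀^ι]→ₗ[K] K) {w : ι → V} (hw : f w ≠ 0) (x : V) :
    ∃ s ∈ Submodule.span K (Set.range w), ∀ j, f (Function.update w j (x - s)) = 0 := by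
  have := Fintype.ofFinite ι
  refine ⟨∑ i, (f (Function.update w i x) / f w) • w i,
    Submodule.sum_smul_mem _ _ fun i _ => Submodule.subset_span ⟨i, rfl⟩, fun j => ?_⟩
  have hslot : ∀ i ≠ j, f (Function.update w j (w i)) = 0 := fun i hij =>
    f.map_update_self w hij.symm
  rw [f.map_update_sub, f.map_update_sum, Finset.sum_eq_single j]
  · simp [hw]
  · intro i _ hij
    rw [f.map_update_smul, hslot i hij, smul_zero]
  · simp

theorem exists_ne_zero_curryLeft_eq_zero {n : ℕ} (hV : finrank K V = n + 2)
    (f : V [⋀^Fin (n + 1)]→ₗ[K] K) : ∃ v ≠ 0, f.curryLeft v = 0 := by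
  obtain rfl | hf := eq_or_ne f 0
  · have : Nontrivial V := nontrivial_of_finrank_eq_succ hV
    exact (exists_ne (0 : V)).imp fun v hv => ⟨hv, rfl⟩
  obtain ⟨w, hw⟩ : ∃ w, f w ≠ 0 := DFunLike.ne_iff.1 hf
  have hw_indep : LinearIndependent K w := by
    by_contra h
    exact hw (f.map_linearDependent w h)
  obtain ⟨x, hx⟩ : ∃ x, x ∉ Submodule.span K (Set.range w) := by
    by_contra! h
    have hspan := finrank_span_eq_card hw_indep
    rw [Submodule.eq_top_iff'.2 h, finrank_top, hV, Fintype.card_fin] at hspan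
    omega
  obtain ⟨s, hs, hslot⟩ := exists_mem_span_map_update_sub_eq_zero f hw x
  have hv : x - s ∉ Submodule.span K (Set.range w) := fun h =>
    hx ((Submodule.sub_mem_iff_left _ hs).1 h)
  refine ⟨x - s, fun h => hv (h ▸ zero_mem _), ?_⟩
  let u : Basis (Fin (n + 2)) K V := basisOfLinearIndependentOfCardEqFinrank
    (linearIndependent_finCons.2 ⟨hw_indep, hv⟩) (by simp [hV])
  have hu : ⇑u = vecCons (x - s) w := coe_basisOfLinearIndependentOfCardEqFinrank _ _
  refine u.ext_alternating fun k _ => ?_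
  by_cases hk : ∃ t, k t = 0
  · obtain ⟨t, ht⟩ := hk
    exact f.map_eq_zero_of_eq (i := 0) (j := t.succ) _ (by simp [ht, hu]) t.succ_ne_zero.symm
  · push Not at hk
    choose k' hk' using fun t => Fin.exists_succ_eq_of_ne_zero (hk t)
    have huk : (fun t => u (k t)) = w ∘ k' := by
      ext t
      rw [hu, ← hk' t, cons_val_succ, Function.comp_apply]
    rw [huk, curryLeft_apply_comp_eq_zero f hslot, AlternatingMap.zero_apply]

end Kernel

section Flattening

variable {R M ι : Type*} [CommSemiring R] [AddCommMonoid M] [Module R M] {n : ℕ}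

/-- The matrix of components `b (e i, e (k 0), …, e (k (n - 1)))` of an alternating form, with rows
indexed by the first slot and columns by the remaining ones, so that the contraction `B²` of the
paper is `flattening b e * (flattening b e)ᵀ`. -/
def flattening (b : M [⋀^Fin (n + 1)]→ₗ[R] R) (e : ι → M) : Matrix ι (Fin n → ι) R :=
  of fun i k => b.curryLeft (e i) (e ∘ k)

lemma eq_zero_of_flattening_eq_zero {b : M [⋀^Fin (n + 1)]→ₗ[R] R} (e : Basis ι R M)
    (h : flattening b e = 0) : b = 0 := by
  refine e.ext_alternating fun k _ => ?_
  have hk : (fun t => e (k t)) = vecCons (e (k 0)) (e ∘ Fin.tail k) :=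
    (Fin.cons_self_tail fun t => e (k t)).symm
  rw [hk]
  exact congr_fun₂ h (k 0) (Fin.tail k)

lemma vecMul_flattening [Fintype ι] (b : M [⋀^Fin (n + 1)]→ₗ[R] R) (e : ι → M) (x : ι → R) :
    x ᵥ* flattening b e = fun k => b.curryLeft (∑ i, x i • e i) (e ∘ k) := by
  ext k
  calc (x ᵥ* flattening b e) k
      = ∑ i, x i • b.toMultilinearMap.curryLeft (e i) (e ∘ k) := rfl
    _ = b.toMultilinearMap.curryLeft (∑ i, x i • e i) (e ∘ k) := by
      simp only [map_sum, map_smul, _root_.sum_apply, _root_.smul_apply]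
    _ = b.curryLeft (∑ i, x i • e i) (e ∘ k) := rfl

end Flattening

lemma det_flattening_mul_transpose_eq_zero {K V ι : Type*} [Field K] [AddCommGroup V] [Module K V]
    [Fintype ι] [DecidableEq ι] {n : ℕ} (hι : Fintype.card ι = n + 2)
    (b : V [⋀^Fin (n + 1)]→ₗ[K] K) (e : Basis ι K V) :
    (flattening b e * (flattening b e)ᵀ).det = 0 := by
  obtain ⟨v, hv, hbv⟩ := exists_ne_zero_curryLeft_eq_zero ((finrank_eq_card_basis e).trans hι) b
  refine exists_vecMul_eq_zero_iff.1 ⟨e.equivFun v, by simpa using hv, ?_⟩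
  have hrow : e.equivFun v ᵥ* flattening b e = 0 := by
    rw [vecMul_flattening, e.sum_equivFun, hbv]
    rfl
  rw [← vecMul_vecMul, hrow, zero_vecMul]

lemma eq_zero_of_mul_transpose_eq_zero {K m n : Type*} [Fintype n] [Ring K] [LinearOrder K]
    [IsStrictOrderedRing K] {A : Matrix m n K} (h : A * Aᵀ = 0) : A = 0 :=
  funext fun i =>
    have hrow : A i ⬝ᵥ A i = 0 := congr_fun₂ h i i
    dotProduct_self_eq_zero.1 hrow

theorem alternating_top_minus_one_contraction_eq_delta_general {K V ι : Type*} [Field K]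
    [LinearOrder K] [IsStrictOrderedRing K] [AddCommGroup V] [Module K V] [Fintype ι]
    [DecidableEq ι] {n : ℕ} (hι : Fintype.card ι = n + 2) (e : Basis ι K V)
    (b : V [⋀^Fin (n + 1)]→ₗ[K] K) (c : K)
    (hb : flattening b e * (flattening b e)ᵀ = c • 1) : b = 0 ∧ c = 0 := by
  have hc : c = 0 := by
    have hdet := det_flattening_mul_transpose_eq_zero hι b e
    rw [hb, det_smul, det_one, mul_one] at hdet
    exact eq_zero_of_pow_eq_zero hdet
  rw [hc, zero_smul] at hb
  exact ⟨eq_zero_of_flattening_eq_zero e (eq_zero_of_mul_transpose_eq_zero hb), hc⟩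

lemma insArgs_eq_vecCons {n : ℕ} (e : Fin (n + 2) → EuclideanSpace ℝ (Fin (n + 2)))
    (i : Fin (n + 2)) (k : Fin n → Fin (n + 2)) :
    insArgs (n + 2) e i k = vecCons (e i) (e ∘ k) := by
  ext t : 1
  cases t using Fin.cases <;> simp [insArgs]

lemma flattening_mul_transpose_apply_eq_sum_insArgs {n : ℕ}
    (b : EuclideanSpace ℝ (Fin (n + 2)) [⋀^Fin (n + 1)]→ₗ[ℝ] ℝ)
    (e : Fin (n + 2) → EuclideanSpace ℝ (Fin (n + 2))) (i j : Fin (n + 2)) :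
    (flattening b e * (flattening b e)ᵀ) i j =
      ∑ k, b (insArgs (n + 2) e i k) * b (insArgs (n + 2) e j k) := by
  simp only [insArgs_eq_vecCons]
  rfl

/-- For an alternating `(m-1)`-form `b` on `ℝ^m` (with `m ≥ 2`), if the
contraction `∑_k b(e_i, e_{k}) b(e_j, e_{k})` over all `(m-2)`-tuples of
standard basis vectors is `c δ_{ij}`, then `b = 0` and `c = 0`. -/
theorem alternating_top_minus_one_contraction_eq_delta
    (m : ℕ) (hm : 2 ≤ m)
    (b : AlternatingMap ℝ (EuclideanSpace ℝ (Fin m)) ℝ (Fin (m - 1))) (c : ℝ)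
    (hb : ∀ i j : Fin m,
      ∑ k : Fin (m - 2) → Fin m,
        b (insArgs m (fun l => EuclideanSpace.single l (1 : ℝ)) i k) *
        b (insArgs m (fun l => EuclideanSpace.single l (1 : ℝ)) j k)
      = c * (if i = j then (1 : ℝ) else 0)) :
    b = 0 ∧ c = 0 := by
  obtain ⟨n, rfl⟩ := Nat.exists_eq_add_of_le' hm
  have he : ⇑(EuclideanSpace.basisFun (Fin (n + 2)) ℝ).toBasis =
      fun l => EuclideanSpace.single l (1 : ℝ) := by
    ext1 l
    simp
  refine alternating_top_minus_one_contraction_eq_delta_general (Fintype.card_fin _)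
    (EuclideanSpace.basisFun (Fin (n + 2)) ℝ).toBasis b c ?_
  ext i j
  rw [he, flattening_mul_transpose_apply_eq_sum_insArgs, Matrix.smul_apply, one_apply, smul_eq_mul]
  exact hb i j
end

section
/- Let n, p be natural numbers with 4 ≤ n, 2 ≤ p, p ≤ n−2, 2p ≠ n−1 and 2p ≠ n+1, and let 𝓡, L, Λ, κ₀, E2, B2 be real constants. Suppose f : ℝ → ℝ is such that for every r > 0 the function r ↦ r^(n−3) * f(r) is differentiable at r with derivative (𝓡/(n−2)) r^(n−4) + 2 L r^(n−3) − (2Λ/(n−2)) r^(n−2) − κ₀ [ ((p−1)/(n−2)) E2 · r^(2p−n−2) + (1/(p(n−2))) B2 · r^(n−2p−2) ], where the exponents are integers (with n, p cast to ℤ). Then there exists μ ∈ ℝ such that for all r > 0: f(r) = 𝓡/((n−2)(n−3)) + (2L/(n−2)) r − (2Λ/((n−1)(n−2))) r² − μ r^(3−n) + (κ₀/(n−2)) [ ((p−1)/(n+1−2p)) E2 · r^(2p−2n+2) − (1/(p(n−1−2p))) B2 · r^(2−2p) ]. -/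
/-!
If no `k i` vanishes, `∑ i, c i / k i * x ^ k i` is a primitive of `∑ i, c i * x ^ (k i - 1)`. So
`x ^ (n - 3) * f x` agrees with such a sum up to an integration constant, which is `-μ`. The
conditions `n ≠ 1, 2, 3` and `2 * p ≠ n ± 1` say exactly that none of the five source terms of the
Einstein equation integrates to a logarithm.
-/

section PowerSources

theorem hasDerivAt_zpow_div {𝕜 : Type*} [NontriviallyNormedField 𝕜] {k : ℤ} {x : 𝕜}
    (hk : (k : 𝕜) ≠ 0) (hx : x ≠ 0 ∨ 0 ≤ k) :
    HasDerivAt (fun y : 𝕜 => y ^ k / (k : 𝕜)) (x ^ (k - 1)) x := by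
  simpa only [mul_div_cancel_left₀ _ hk] using
    (hasDerivAt_zpow k x hx).div_const (k : 𝕜)

variable {𝕜 ι : Type*} [RCLike 𝕜] {s : Set 𝕜} {I : Finset ι} {c : ι → 𝕜} {k : ι → ℤ}

theorem exists_eq_sum_zpow_div_add_const_of_hasDerivAt {g : 𝕜 → 𝕜} (hs : IsOpen s)
    (hs' : IsPreconnected s) (h0 : (0 : 𝕜) ∉ s) (hk : ∀ i ∈ I, k i ≠ 0)
    (hg : ∀ x ∈ s, HasDerivAt g (∑ i ∈ I, c i * x ^ (k i - 1)) x) :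
    ∃ C : 𝕜, ∀ x ∈ s, g x = ∑ i ∈ I, c i * (x ^ k i / (k i : 𝕜)) + C := by
  have primitive : ∀ x ∈ s, HasDerivAt (fun y => ∑ i ∈ I, c i * (y ^ k i / (k i : 𝕜)))
      (∑ i ∈ I, c i * x ^ (k i - 1)) x := fun x hx =>
    HasDerivAt.fun_sum fun i hi => (hasDerivAt_zpow_div (Int.cast_ne_zero.mpr (hk i hi))
      (Or.inl (ne_of_mem_of_not_mem hx h0))).const_mul (c i)
  exact hs.exists_eq_add_of_deriv_eq hs'
    (fun x hx => (hg x hx).differentiableAt.differentiableWithinAt)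
    (fun x hx => (primitive x hx).differentiableAt.differentiableWithinAt)
    (fun x hx => (hg x hx).deriv.trans (primitive x hx).deriv.symm)

theorem exists_eq_sum_zpow_of_hasDerivAt_zpow_mul {f : 𝕜 → 𝕜} {m : ℤ} (hs : IsOpen s)
    (hs' : IsPreconnected s) (h0 : (0 : 𝕜) ∉ s) (hk : ∀ i ∈ I, k i ≠ 0)
    (hf : ∀ x ∈ s, HasDerivAt (fun y => y ^ m * f y) (∑ i ∈ I, c i * x ^ (k i - 1)) x) :
    ∃ C : 𝕜, ∀ x ∈ s,
      f x = ∑ i ∈ I, c i / (k i : 𝕜) * x ^ (k i - m) + C * x ^ (-m) := by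
  obtain ⟨C, hC⟩ := exists_eq_sum_zpow_div_add_const_of_hasDerivAt hs hs' h0 hk hf
  refine ⟨C, fun x hx => ?_⟩
  have hx0 : x ≠ 0 := ne_of_mem_of_not_mem hx h0
  have term_mul (i : ι) :
      c i * (x ^ k i / (k i : 𝕜)) * x ^ (-m) = c i / (k i : 𝕜) * x ^ (k i - m) := by
    rw [sub_eq_add_neg, zpow_add₀ hx0]
    ring
  calc f x = (x ^ m * f x) * x ^ (-m) := by
        rw [mul_right_comm, ← zpow_add₀ hx0, add_neg_cancel, zpow_zero, one_mul]
    _ = ∑ i ∈ I, c i / (k i : 𝕜) * x ^ (k i - m) + C * x ^ (-m) := by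
        simp only [hC x hx, add_mul, Finset.sum_mul, term_mul]

end PowerSources

theorem RT_metric_function_generic_general {𝕜 : Type*} [RCLike 𝕜] {s : Set 𝕜} (hs : IsOpen s)
    (hs' : IsPreconnected s) (h0 : (0 : 𝕜) ∉ s) (n p : ℤ) (hn1 : n ≠ 1) (hn2 : n ≠ 2)
    (hn3 : n ≠ 3) (hp : p ≠ 0) (h1 : 2 * p ≠ n - 1) (h2 : 2 * p ≠ n + 1)
    (𝓡 L Λ κ₀ E2 B2 : 𝕜) (f : 𝕜 → 𝕜)
    (hf : ∀ r ∈ s,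
      HasDerivAt (fun t : 𝕜 => t ^ (n - 3) * f t)
        ((𝓡 / ((n : 𝕜) - 2)) * r ^ (n - 4)
          + 2 * L * r ^ (n - 3)
          - (2 * Λ / ((n : 𝕜) - 2)) * r ^ (n - 2)
          - κ₀ * ((((p : 𝕜) - 1) / ((n : 𝕜) - 2)) * E2 * r ^ (2 * p - n - 2)
            + (1 / ((p : 𝕜) * ((n : 𝕜) - 2))) * B2 * r ^ (n - 2 * p - 2))) r) :
    ∃ μ : 𝕜, ∀ r ∈ s,
      f r = 𝓡 / (((n : 𝕜) - 2) * ((n : 𝕜) - 3))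
        + (2 * L / ((n : 𝕜) - 2)) * r
        - (2 * Λ / (((n : 𝕜) - 1) * ((n : 𝕜) - 2))) * r ^ 2
        - μ * r ^ (3 - n)
        + (κ₀ / ((n : 𝕜) - 2)) *
          ((((p : 𝕜) - 1) / ((n : 𝕜) + 1 - 2 * (p : 𝕜))) * E2 * r ^ (2 * p - 2 * n + 2)
            - (1 / ((p : 𝕜) * ((n : 𝕜) - 1 - 2 * (p : 𝕜)))) * B2 * r ^ (2 - 2 * p)) := by
  let c : Fin 5 → 𝕜 := ![𝓡 / (n - 2), 2 * L, -(2 * Λ / (n - 2)), -(κ₀ * ((p - 1) / (n - 2) * E2)),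
    -(κ₀ * (1 / (p * (n - 2)) * B2))]
  let k : Fin 5 → ℤ := ![n - 3, n - 2, n - 1, 2 * p - n - 1, n - 2 * p - 1]
  have no_log : ∀ i ∈ Finset.univ, k i ≠ 0 := by
    intro i _
    fin_cases i <;> dsimp [k] <;> omega
  have source (r : 𝕜) (hr : r ∈ s) :
      HasDerivAt (fun t => t ^ (n - 3) * f t) (∑ i, c i * r ^ (k i - 1)) r := by
    convert hf r hr using 1
    simp only [Fin.sum_univ_five, c, k, Matrix.cons_val]
    ring_nf
  obtain ⟨C, hC⟩ := exists_eq_sum_zpow_of_hasDerivAt_zpow_mul hs hs' h0 no_log source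
  refine ⟨-C, fun r hr => ?_⟩
  have expansion : f r = 𝓡 / (n - 2) / (n - 3) * r ^ (0 : ℤ)
      + 2 * L / (n - 2) * r ^ (1 : ℤ)
      + -(2 * Λ / (n - 2)) / (n - 1) * r ^ (2 : ℤ)
      + -(κ₀ * ((p - 1) / (n - 2) * E2)) / -(n + 1 - 2 * p) * r ^ (2 * p - 2 * n + 2)
      + -(κ₀ * (1 / (p * (n - 2)) * B2)) / (n - 1 - 2 * p) * r ^ (2 - 2 * p)
      + C * r ^ (3 - n) := by
    convert hC r hr using 1
    simp only [Fin.sum_univ_five, c, k, Matrix.cons_val]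
    push_cast
    ring_nf
  simp only [expansion, zpow_ofNat]
  have hn1' : (n : 𝕜) - 1 ≠ 0 := sub_ne_zero.mpr (mod_cast hn1)
  have hn2' : (n : 𝕜) - 2 ≠ 0 := sub_ne_zero.mpr (mod_cast hn2)
  have hn3' : (n : 𝕜) - 3 ≠ 0 := sub_ne_zero.mpr (mod_cast hn3)
  have hp' : (p : 𝕜) ≠ 0 := mod_cast hp
  have hE : (n : 𝕜) + 1 - 2 * p ≠ 0 := sub_ne_zero.mpr (mod_cast h2.symm)
  have hB : (n : 𝕜) - 1 - 2 * p ≠ 0 := sub_ne_zero.mpr (mod_cast h1.symm)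
  field_simp
  ring

/-- Radial integration of the Einstein equation for the Robinson–Trautman
metric function `2H` in the generic case `2p ≠ n ± 1`: if `r^(n-3) * f r` has
the prescribed derivative for all `r > 0`, then `f` is given by the paper's
formula (grr_final) for some mass constant `μ`. -/
theorem RT_metric_function_generic
    (n p : ℕ) (hn : 4 ≤ n) (hp : 2 ≤ p) (hpn : p ≤ n - 2)
    (h1 : 2 * p ≠ n - 1) (h2 : 2 * p ≠ n + 1)
    (𝓡 L Λ κ₀ E2 B2 : ℝ) (f : ℝ → ℝ)
    (hf : ∀ r : ℝ, 0 < r →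
      HasDerivAt (fun s : ℝ => s ^ ((n : ℤ) - 3) * f s)
        ((𝓡 / ((n : ℝ) - 2)) * r ^ ((n : ℤ) - 4)
          + 2 * L * r ^ ((n : ℤ) - 3)
          - (2 * Λ / ((n : ℝ) - 2)) * r ^ ((n : ℤ) - 2)
          - κ₀ * ( (((p : ℝ) - 1) / ((n : ℝ) - 2)) * E2 * r ^ (2 * (p : ℤ) - (n : ℤ) - 2)
            + (1 / ((p : ℝ) * ((n : ℝ) - 2))) * B2 * r ^ ((n : ℤ) - 2 * (p : ℤ) - 2) )) r) :
    ∃ μ : ℝ, ∀ r : ℝ, 0 < r →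
      f r = 𝓡 / (((n : ℝ) - 2) * ((n : ℝ) - 3))
        + (2 * L / ((n : ℝ) - 2)) * r
        - (2 * Λ / (((n : ℝ) - 1) * ((n : ℝ) - 2))) * r ^ 2
        - μ * r ^ (3 - (n : ℤ))
        + (κ₀ / ((n : ℝ) - 2)) *
          ( (((p : ℝ) - 1) / ((n : ℝ) + 1 - 2 * (p : ℝ))) * E2 * r ^ (2 * (p : ℤ) - 2 * (n : ℤ) + 2)
            - (1 / ((p : ℝ) * ((n : ℝ) - 1 - 2 * (p : ℝ)))) * B2 * r ^ (2 - 2 * (p : ℤ)) ) := by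
  simpa using RT_metric_function_generic_general isOpen_Ioi isPreconnected_Ioi
    (Set.self_notMem_Ioi (a := (0 : ℝ))) n p (by omega) (by omega) (by omega) (by omega) (by omega)
    (by omega) 𝓡 L Λ κ₀ E2 B2 f (by simpa using hf)
end

section
/- Let p ≥ 3 be a natural number, set n = 2p − 1 (so n ≥ 5 is odd and 2p = n+1), and let 𝓡, L, Λ, κ₀, E2, B2 be real constants. Suppose f : ℝ → ℝ is such that for every r > 0 the function r ↦ r^(n−3) * f(r) is differentiable at r with derivative (𝓡/(n−2)) r^(n−4) + 2 L r^(n−3) − (2Λ/(n−2)) r^(n−2) − κ₀ [ ((n−1)/(2(n−2))) E2 · r^(−1) + (2/((n+1)(n−2))) B2 · r^(−3) ]. Then there exists μ ∈ ℝ such that for all r > 0: f(r) = 𝓡/((n−2)(n−3)) + (2L/(n−2)) r − (2Λ/((n−1)(n−2))) r² − μ r^(3−n) + (κ₀/(n−2)) [ −((n−1)/2) E2 · (Real.log r) · r^(3−n) + (1/(n+1)) B2 · r^(1−n) ]. -/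
/-!
The equation says that `r ^ (n - 3) * f r` has a prescribed derivative on the half-line `0 < r`, so
it is a fixed primitive plus a constant, and the constant becomes the mass term `μ * r ^ (3 - n)`.
In the resonant case `2p = n + 1` the electric source term is proportional to `r ^ (-1)`, the one
power whose primitive is a logarithm.
-/

theorem exists_forall_eq_add_div_of_hasDerivAt_mul {𝕜 : Type*} [RCLike 𝕜] {s : Set 𝕜}
    (hs : IsOpen s) (hs' : IsPreconnected s) {w f G G' : 𝕜 → 𝕜} (hw : ∀ x ∈ s, w x ≠ 0)
    (hf : ∀ x ∈ s, HasDerivAt (fun y => w y * f y) (G' x) x)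
    (hG : ∀ x ∈ s, HasDerivAt G (G' x) x) :
    ∃ c, ∀ x ∈ s, f x = (G x + c) / w x := by
  obtain ⟨c, hc⟩ := hs.exists_eq_add_of_deriv_eq hs'
    (fun x hx => (hf x hx).differentiableAt.differentiableWithinAt)
    (fun x hx => (hG x hx).differentiableAt.differentiableWithinAt)
    (fun x hx => (hf x hx).deriv.trans (hG x hx).deriv.symm)
  exact ⟨c, fun x hx => eq_div_of_mul_eq (hw x hx) ((mul_comm _ _).trans (hc hx))⟩

theorem hasDerivAt_div_mul_zpow {𝕜 : Type*} [NontriviallyNormedField 𝕜] {m : ℤ} (hm : (m : 𝕜) ≠ 0)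
    (a : 𝕜) {x : 𝕜} (hx : x ≠ 0) :
    HasDerivAt (fun y => a / m * y ^ m) (a * x ^ (m - 1)) x := by
  refine ((hasDerivAt_zpow m x (.inl hx)).const_mul (a / m)).congr_deriv ?_
  rw [← mul_assoc, div_mul_cancel₀ a hm]

/-- The primitive, with no constant term, of the right-hand side of the radial Einstein equation
for `r ^ (n - 3) * 2H` in the resonant case. Its coefficients are left as those of the equation
divided by the new exponents. -/
noncomputable def rtRadialPrimitive (n : ℤ) (𝓡 L Λ κ₀ E2 B2 r : ℝ) : ℝ :=
  𝓡 / (n - 2) / (n - 3) * r ^ (n - 3) + 2 * L / (n - 2) * r ^ (n - 2)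
    - 2 * Λ / (n - 2) / (n - 1) * r ^ (n - 1)
    - κ₀ * ((n - 1) / (2 * (n - 2)) * E2 * Real.log r
      + 2 / ((n + 1) * (n - 2)) * B2 / (-2) * r ^ (-2 : ℤ))

section

variable {n : ℤ} (𝓡 L Λ κ₀ E2 B2 : ℝ) {r : ℝ}

theorem hasDerivAt_rtRadialPrimitive (h1 : n ≠ 1) (h2 : n ≠ 2) (h3 : n ≠ 3) (hr : r ≠ 0) :
    HasDerivAt (rtRadialPrimitive n 𝓡 L Λ κ₀ E2 B2)
      (𝓡 / (n - 2) * r ^ (n - 4) + 2 * L * r ^ (n - 3) - 2 * Λ / (n - 2) * r ^ (n - 2)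
        - κ₀ * ((n - 1) / (2 * (n - 2)) * E2 * r ^ (-1 : ℤ)
          + 2 / ((n + 1) * (n - 2)) * B2 * r ^ (-3 : ℤ))) r := by
  have primitive_zpow (a : ℝ) (k : ℤ) (hk : k ≠ 0) :
      HasDerivAt (fun s => a / k * s ^ k) (a * r ^ (k - 1)) r :=
    hasDerivAt_div_mul_zpow (Int.cast_ne_zero.mpr hk) a hr
  have curvature := primitive_zpow (𝓡 / (n - 2)) (n - 3) (sub_ne_zero.mpr h3)
  have expansion := primitive_zpow (2 * L) (n - 2) (sub_ne_zero.mpr h2)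
  have cosmological := primitive_zpow (2 * Λ / (n - 2)) (n - 1) (sub_ne_zero.mpr h1)
  have electric := (Real.hasDerivAt_log hr).const_mul ((n - 1) / (2 * (n - 2)) * E2)
  have magnetic := primitive_zpow (2 / ((n + 1) * (n - 2)) * B2) (-2) (by decide)
  have total := ((curvature.add expansion).sub cosmological).sub
    ((electric.add magnetic).const_mul κ₀)
  push_cast [sub_sub n, ← zpow_neg_one] at total
  exact total

theorem rtRadialPrimitive_div_zpow (hr : r ≠ 0) :
    rtRadialPrimitive n 𝓡 L Λ κ₀ E2 B2 r / r ^ (n - 3) =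
      𝓡 / ((n - 2) * (n - 3)) + 2 * L / (n - 2) * r - 2 * Λ / ((n - 1) * (n - 2)) * r ^ 2
        + κ₀ / (n - 2) * (-((n - 1) / 2) * E2 * Real.log r * r ^ (3 - n)
          + 1 / (n + 1) * B2 * r ^ (1 - n)) := by
  have zpow_three_sub : r ^ (3 - n) = (r ^ (n - 3))⁻¹ := by rw [← zpow_neg, neg_sub]
  have zpow_one_sub : r ^ (1 - n) = r ^ (-2 : ℤ) * (r ^ (n - 3))⁻¹ := by
    rw [← zpow_neg, ← zpow_add₀ hr]; ring_nf
  have zpow_sub_two : r ^ (n - 2) = r * r ^ (n - 3) := by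
    rw [← zpow_one_add₀ hr]; ring_nf
  have zpow_sub_one : r ^ (n - 1) = r ^ 2 * r ^ (n - 3) := by
    rw [← zpow_natCast, ← zpow_add₀ hr]; ring_nf
  rw [rtRadialPrimitive, zpow_sub_one, zpow_one_sub, zpow_sub_two, zpow_three_sub]
  field_simp
  ring

end

theorem RT_metric_function_log_plus_general (n : ℤ) (_hneg : n ≠ -1)
    (h1 : n ≠ 1) (h2 : n ≠ 2) (h3 : n ≠ 3) (𝓡 L Λ κ₀ E2 B2 : ℝ) (f : ℝ → ℝ)
    (hf : ∀ r : ℝ, 0 < r →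
      HasDerivAt (fun s : ℝ => s ^ (n - 3) * f s)
        ((𝓡 / (n - 2)) * r ^ (n - 4)
          + 2 * L * r ^ (n - 3)
          - (2 * Λ / (n - 2)) * r ^ (n - 2)
          - κ₀ * (((n - 1) / (2 * (n - 2))) * E2 * r ^ (-1 : ℤ)
            + (2 / ((n + 1) * (n - 2))) * B2 * r ^ (-3 : ℤ))) r) :
    ∃ μ : ℝ, ∀ r : ℝ, 0 < r →
      f r = 𝓡 / ((n - 2) * (n - 3))
        + (2 * L / (n - 2)) * r
        - (2 * Λ / ((n - 1) * (n - 2))) * r ^ 2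
        - μ * r ^ (3 - n)
        + (κ₀ / (n - 2)) *
          (-((n - 1) / 2) * E2 * Real.log r * r ^ (3 - n)
            + (1 / (n + 1)) * B2 * r ^ (1 - n)) := by
  obtain ⟨c, hc⟩ := exists_forall_eq_add_div_of_hasDerivAt_mul isOpen_Ioi isPreconnected_Ioi
    (fun r hr => zpow_ne_zero (n - 3) (Set.mem_Ioi.mp hr).ne') hf
    (fun r hr => hasDerivAt_rtRadialPrimitive 𝓡 L Λ κ₀ E2 B2 h1 h2 h3 (Set.mem_Ioi.mp hr).ne')
  refine ⟨-c, fun r hr => ?_⟩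
  have mass_term : c / r ^ (n - 3) = c * r ^ (3 - n) := by
    rw [div_eq_mul_inv, ← zpow_neg, neg_sub]
  rw [hc r hr, add_div, rtRadialPrimitive_div_zpow 𝓡 L Λ κ₀ E2 B2 hr.ne', mass_term]
  ring

/-- Radial integration of the Einstein equation for the Robinson–Trautman
metric function `2H` in the resonant case `2p = n + 1` (`n = 2p - 1` odd):
the solution contains the logarithmic term of the paper's formula (H_log+). -/
theorem RT_metric_function_log_plus
    (p : ℕ) (hp : 3 ≤ p) (n : ℕ) (hn : n = 2 * p - 1)
    (𝓡 L Λ κ₀ E2 B2 : ℝ) (f : ℝ → ℝ)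
    (hf : ∀ r : ℝ, 0 < r →
      HasDerivAt (fun s : ℝ => s ^ ((n : ℤ) - 3) * f s)
        ((𝓡 / ((n : ℝ) - 2)) * r ^ ((n : ℤ) - 4)
          + 2 * L * r ^ ((n : ℤ) - 3)
          - (2 * Λ / ((n : ℝ) - 2)) * r ^ ((n : ℤ) - 2)
          - κ₀ * ( (((n : ℝ) - 1) / (2 * ((n : ℝ) - 2))) * E2 * r ^ (-1 : ℤ)
            + (2 / (((n : ℝ) + 1) * ((n : ℝ) - 2))) * B2 * r ^ (-3 : ℤ) )) r) :
    ∃ μ : ℝ, ∀ r : ℝ, 0 < r →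
      f r = 𝓡 / (((n : ℝ) - 2) * ((n : ℝ) - 3))
        + (2 * L / ((n : ℝ) - 2)) * r
        - (2 * Λ / (((n : ℝ) - 1) * ((n : ℝ) - 2))) * r ^ 2
        - μ * r ^ (3 - (n : ℤ))
        + (κ₀ / ((n : ℝ) - 2)) *
          ( -(((n : ℝ) - 1) / 2) * E2 * Real.log r * r ^ (3 - (n : ℤ))
            + (1 / ((n : ℝ) + 1)) * B2 * r ^ (1 - (n : ℤ)) ) := by
  simpa only [Int.cast_natCast] using RT_metric_function_log_plus_general n (by omega) (by omega)
    (by omega) (by omega) 𝓡 L Λ κ₀ E2 B2 f (by simpa only [Int.cast_natCast] using hf)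
end

section
/- Let m ≥ 1 be a natural number and let H : ℝ → Matrix (Fin m) (Fin m) ℝ be differentiable with d(u) := det (H u) > 0 for all u ∈ ℝ. If for every u the derivative satisfies H'(u) = ( d'(u) / (m * d(u)) ) • H(u), then the map u ↦ (d u) ^ (−1/m : ℝ) • H u (real power Real.rpow of the positive determinant) is constant on ℝ; consequently there exists a matrix Γ with det Γ = 1 such that H u = (d u) ^ (1/m : ℝ) • Γ for all u. -/
open Matrix

/-! For `d` nonvanishing, `d ^ (-p)` is an integrating factor of the linear equation
`f' = (p d' / d) f`: multiplying any solution `f` by it leaves a constant. For `d = det H` and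
`p = 1 / m`, homogeneity of degree `m` of the determinant makes this constant unimodular. -/

theorem differentiableOn_det {𝕜 E R n : Type*} [NontriviallyNormedField 𝕜] [NormedAddCommGroup E]
    [NormedSpace 𝕜 E] [NormedCommRing R] [NormedAlgebra 𝕜 R] [Fintype n] [DecidableEq n]
    {A : E → Matrix n n R} {s : Set E} (hA : ∀ i j, DifferentiableOn 𝕜 (fun x => A x i j) s) :
    DifferentiableOn 𝕜 (fun x => (A x).det) s := by
  have hprod (σ : Equiv.Perm n) : DifferentiableOn 𝕜 (fun x => ∏ i, A x (σ i) i) s := fun x hx =>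
    (HasFDerivWithinAt.finsetProd fun i _ =>
      (hA (σ i) i x hx).hasFDerivWithinAt).differentiableWithinAt
  simp only [det_apply]
  exact .fun_sum fun σ _ => (hprod σ).const_smul (Equiv.Perm.sign σ)

section IntegratingFactor

variable {E : Type*} [NormedAddCommGroup E] [NormedSpace ℝ E] {d : ℝ → ℝ} {f : ℝ → E} {p : ℝ}

theorem hasDerivAt_rpow_neg_smul_zero {d' u : ℝ} (hd : HasDerivAt d d' u) (hne : d u ≠ 0)
    (hf : HasDerivAt f ((p * d' / d u) • f u) u) :
    HasDerivAt (fun t => d t ^ (-p) • f t) 0 u := by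
  refine ((hd.rpow_const (p := -p) (.inl hne)).fun_smul hf).congr_deriv ?_
  rw [smul_smul, ← add_smul, Real.rpow_sub_one hne]
  convert zero_smul ℝ (f u) using 2
  ring

theorem rpow_neg_smul_eq_of_deriv_eq {s : Set ℝ} (hs : IsOpen s) (hconn : IsPreconnected s)
    (hd : DifferentiableOn ℝ d s) (hne : ∀ u ∈ s, d u ≠ 0) (hf : DifferentiableOn ℝ f s)
    (hode : ∀ u ∈ s, deriv f u = (p * deriv d u / d u) • f u) {u v : ℝ} (hu : u ∈ s) (hv : v ∈ s) :
    d u ^ (-p) • f u = d v ^ (-p) • f v := by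
  have hderiv : ∀ t ∈ s, HasDerivAt (fun t => d t ^ (-p) • f t) 0 t := fun t ht => by
    have hnhds := hs.mem_nhds ht
    refine hasDerivAt_rpow_neg_smul_zero (hd.hasDerivAt hnhds) (hne t ht) ?_
    exact hode t ht ▸ hf.hasDerivAt hnhds
  exact hs.is_const_of_deriv_eq_zero hconn
    (fun t ht => (hderiv t ht).differentiableAt.differentiableWithinAt)
    (fun t ht => (hderiv t ht).deriv) hu hv

end IntegratingFactor

theorem det_rpow_neg_smul_eq_one {n : Type*} [Fintype n] [DecidableEq n] [Nonempty n]
    {A : Matrix n n ℝ} (hA : 0 < A.det) :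
    (A.det ^ (-(1 / Fintype.card n) : ℝ) • A).det = 1 := by
  have hexp : (-(1 / Fintype.card n) : ℝ) * Fintype.card n = -1 := by field_simp
  rw [det_smul, ← Real.rpow_mul_natCast hA.le, hexp, Real.rpow_neg_one, inv_mul_cancel₀ hA.ne']

theorem conformal_factor_factorization_general {n : Type*} [Fintype n] [DecidableEq n] [Nonempty n]
    {s : Set ℝ} (hs : IsOpen s) (hconn : IsConnected s) {H : ℝ → Matrix n n ℝ}
    (hdiff : ∀ i j, DifferentiableOn ℝ (fun u => H u i j) s)
    (hdet : ∀ u ∈ s, 0 < (H u).det)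
    (hode : ∀ u ∈ s, ∀ i j, deriv (fun t => H t i j) u
      = (deriv (fun t => (H t).det) u / ((Fintype.card n : ℝ) * (H u).det)) * H u i j) :
    (∀ u ∈ s, ∀ v ∈ s, (H u).det ^ (-(1 / Fintype.card n) : ℝ) • H u
        = (H v).det ^ (-(1 / Fintype.card n) : ℝ) • H v)
    ∧ ∃ Γ : Matrix n n ℝ, Γ.det = 1 ∧
        ∀ u ∈ s, H u = (H u).det ^ (1 / Fintype.card n : ℝ) • Γ := by
  have hconst : ∀ u ∈ s, ∀ v ∈ s, (H u).det ^ (-(1 / Fintype.card n) : ℝ) • H u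
      = (H v).det ^ (-(1 / Fintype.card n) : ℝ) • H v := fun u hu v hv => by
    ext i j
    refine rpow_neg_smul_eq_of_deriv_eq (f := fun t => H t i j) hs hconn.isPreconnected
      (differentiableOn_det hdiff) (fun t ht => (hdet t ht).ne') (hdiff i j) (fun t ht => ?_) hu hv
    rw [hode t ht i j, smul_eq_mul, one_div_mul_eq_div, div_div]
  obtain ⟨u₀, hu₀⟩ := hconn.nonempty
  refine ⟨hconst, _, det_rpow_neg_smul_eq_one (hdet u₀ hu₀), fun u hu => ?_⟩
  rw [← hconst u hu u₀ hu₀, smul_smul, ← Real.rpow_add (hdet u hu), add_neg_cancel,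
    Real.rpow_zero, one_smul]

/-- If a differentiable family of matrices `H u` with positive determinant
`d u = det (H u)` satisfies `H' u = (d' u / (m * d u)) • H u`, then
`u ↦ (d u)^(-1/m) • H u` is constant; consequently `H u = (d u)^(1/m) • Γ`
for a fixed matrix `Γ` of unit determinant. -/
theorem conformal_factor_factorization (m : ℕ) (hm : 1 ≤ m)
    (H : ℝ → Matrix (Fin m) (Fin m) ℝ)
    (hdiff : ∀ i j, Differentiable ℝ (fun u => H u i j))
    (hdet : ∀ u : ℝ, 0 < (H u).det)
    (hode : ∀ (u : ℝ) (i j : Fin m), deriv (fun t => H t i j) u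
      = (deriv (fun t => (H t).det) u / ((m : ℝ) * (H u).det)) * H u i j) :
    (∀ u v : ℝ,
        ((H u).det) ^ (-(1 / m) : ℝ) • H u = ((H v).det) ^ (-(1 / m) : ℝ) • H v)
    ∧ ∃ Γ : Matrix (Fin m) (Fin m) ℝ, Γ.det = 1 ∧
        ∀ u : ℝ, H u = ((H u).det) ^ ((1 / m : ℝ)) • Γ := by
  have : Nonempty (Fin m) := Fin.pos_iff_nonempty.mp hm
  simpa using conformal_factor_factorization_general isOpen_univ isConnected_univ
    (fun i j => (hdiff i j).differentiableOn) (fun u _ => hdet u)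
    (fun u _ i j => by simpa only [Fintype.card_fin] using hode u i j)
end

section
/- Let X be a type, let h : ℝ → X → ℝ satisfy h u x > 0 for all u ∈ ℝ and x ∈ X, and suppose that for each x the function u ↦ h u x is differentiable. Let μ : ℝ → ℝ be differentiable with μ u ≠ 0 for all u, and let c ∈ ℝ with c ≠ 0. If for all u ∈ ℝ and x ∈ X one has deriv μ u = c * μ u * (deriv (fun t => h t x) u) / (h u x), then for all u ∈ ℝ and all x, y ∈ X: h u x * h 0 y = h u y * h 0 x (i.e. h factorizes as h(u,x) = U(u) X(x)). -/
/-!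
Dividing the equation `μ' = c μ (log h)_{,u}` by `c μ` gives `(log h)_{,u} = μ' / (c μ)`, which
does not depend on `x`. Two nowhere vanishing functions with the same logarithmic derivative on a
connected open set are proportional there, so any two slices `h (·, x)` and `h (·, y)` are.
-/

section

open Set

variable {𝕜 𝕜' : Type*} [NontriviallyNormedField 𝕜] [IsRCLikeNormedField 𝕜]
  [NontriviallyNormedField 𝕜'] [NormedAlgebra 𝕜 𝕜'] {s : Set 𝕜}

theorem mul_eq_mul_of_eqOn_logDeriv {f g : 𝕜 → 𝕜'} (hs : IsOpen s) (hsc : IsPreconnected s)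
    (hf : DifferentiableOn 𝕜 f s) (hg : DifferentiableOn 𝕜 g s)
    (hf0 : ∀ u ∈ s, f u ≠ 0) (hg0 : ∀ u ∈ s, g u ≠ 0)
    (hfg : EqOn (logDeriv f) (logDeriv g) s) {u v : 𝕜} (hu : u ∈ s) (hv : v ∈ s) :
    f u * g v = g u * f v := by
  obtain ⟨z, -, hz⟩ := (logDeriv_eqOn_iff hf hg hs hsc hg0 hf0).mp hfg
  rw [hz hu, hz hv, Pi.smul_apply, Pi.smul_apply, smul_mul_assoc, mul_smul_comm]

theorem separation_of_variables_general {X : Type*} {h : 𝕜 → X → 𝕜'} {μ : 𝕜 → 𝕜'} {c : 𝕜'}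
    (hs : IsOpen s) (hsc : IsPreconnected s)
    (h0 : ∀ u ∈ s, ∀ x, h u x ≠ 0) (hdiff : ∀ x, DifferentiableOn 𝕜 (fun u => h u x) s)
    (hμ0 : ∀ u ∈ s, μ u ≠ 0) (hc : c ≠ 0)
    (hode : ∀ u ∈ s, ∀ x, HasDerivAt μ (c * μ u * deriv (fun t => h t x) u / h u x) u)
    {u v : 𝕜} (hu : u ∈ s) (hv : v ∈ s) (x y : X) :
    h u x * h v y = h u y * h v x := by
  have logDeriv_indep : EqOn (logDeriv fun t => h t x) (logDeriv fun t => h t y) s := by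
    intro t ht
    apply mul_left_cancel₀ (mul_ne_zero hc (hμ0 t ht))
    rw [logDeriv_apply, logDeriv_apply, ← mul_div_assoc, ← mul_div_assoc]
    exact (hode t ht x).unique (hode t ht y)
  exact mul_eq_mul_of_eqOn_logDeriv hs hsc (hdiff x) (hdiff y)
    (fun t ht => h0 t ht x) (fun t ht => h0 t ht y) logDeriv_indep hu hv

end

/-- Separation of variables: if `μ = μ(u)` is nowhere zero and differentiable and
`μ' u = c * μ u * h_{,u}(u,x) / h(u,x)` holds for all `u` and all `x`, with
`h > 0` and `c ≠ 0`, then `h` factorizes as `h(u,x) = U(u) X(x)`, expressed as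
`h u x * h 0 y = h u y * h 0 x`. -/
theorem separation_of_variables (X : Type*) (h : ℝ → X → ℝ)
    (hpos : ∀ (u : ℝ) (x : X), 0 < h u x)
    (hdiff : ∀ x : X, Differentiable ℝ (fun u => h u x))
    (μ : ℝ → ℝ) (hμdiff : Differentiable ℝ μ) (hμ0 : ∀ u : ℝ, μ u ≠ 0)
    (c : ℝ) (hc : c ≠ 0)
    (hode : ∀ (u : ℝ) (x : X),
      deriv μ u = c * μ u * (deriv (fun t => h t x) u) / (h u x)) :
    ∀ (u : ℝ) (x y : X), h u x * h 0 y = h u y * h 0 x := by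
  intro u x y
  exact separation_of_variables_general isOpen_univ isPreconnected_univ
    (fun t _ z => (hpos t z).ne') (fun z => (hdiff z).differentiableOn) (fun t _ => hμ0 t) hc
    (fun t _ z => hode t z ▸ (hμdiff t).hasDerivAt) (Set.mem_univ u) (Set.mem_univ 0) x y
end

section
/- Let m ≥ 2 be a natural number, Φ ∈ ℝ with Φ ≠ 0, z : Fin m → ℝ, and T : Fin m → Fin m → Fin m → Fin m → ℝ satisfying the antisymmetry T k i l j = − T i k l j for all indices. Suppose that for all i, j ∈ Fin m: ((m+1)/(m−1)) * Φ * ( z i * z j − ((∑_k (z k)^2)/m) * δ_{ij} ) = − ∑_{k} ∑_{l} z k * z l * T k i l j, where δ_{ij} is the Kronecker delta. Then z = 0. -/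
/-!
Read the condition as an equality of matrices in `i, j` and contract it with `z_i`. The right-hand
side dies because `T` is antisymmetric in the slots contracted with `z_i z_k`, while the trace-free
part of `z ⊗ z` maps `z` to `(1 - 1/m) |z|² z`. As `m ≠ 1`, this leaves `|z|² z = 0`.
-/

namespace TypeDWeyl

open Matrix

variable {ι K : Type*}

/-- The trace-free part `z_i z_j - (|z|²/n) δ_{ij}` of the tensor square of a vector `z` with `n`
components. -/
def traceFreeSquare [Fintype ι] [DecidableEq ι] [Field K] (z : ι → K) : Matrix ι ι K :=
  vecMulVec z z - (z ⬝ᵥ z / Fintype.card ι) • (1 : Matrix ι ι K)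

/-- The contraction `z_k z_l T_{kilj}` of a rank-four tensor with `z` in its first and third slots;
the free indices `i`, `j` are the row and the column. -/
def contractFirstThird [Fintype ι] [Semiring K] (z : ι → K) (T : ι → ι → ι → ι → K) :
    Matrix ι ι K :=
  of fun i j ↦ ∑ k, ∑ l, z k * z l * T k i l j

theorem vecMul_traceFreeSquare [Fintype ι] [DecidableEq ι] [Field K] (z : ι → K) :
    z ᵥ* traceFreeSquare z = ((1 - (Fintype.card ι : K)⁻¹) * (z ⬝ᵥ z)) • z := by
  rw [traceFreeSquare, vecMul_sub, vecMul_vecMulVec, vecMul_smul, vecMul_one, ← sub_smul]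
  congr 1
  ring

theorem eq_zero_of_vecMul_traceFreeSquare_eq_zero [Fintype ι] [DecidableEq ι] [Nontrivial ι]
    [Field K] [LinearOrder K] [IsStrictOrderedRing K] {z : ι → K}
    (hz : z ᵥ* traceFreeSquare z = 0) : z = 0 := by
  have one_sub_card_inv_ne_zero : 1 - (Fintype.card ι : K)⁻¹ ≠ 0 := by
    rw [sub_ne_zero, ne_comm, inv_ne_one]
    exact_mod_cast Fintype.one_lt_card.ne'
  rw [vecMul_traceFreeSquare, smul_eq_zero, mul_eq_zero, dotProduct_self_eq_zero] at hz
  exact hz.elim (·.resolve_left one_sub_card_inv_ne_zero) id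

theorem dotProduct_mulVec_self_eq_zero_of_transpose_eq_neg [Fintype ι] [CommRing K]
    [IsAddTorsionFree K] {A : Matrix ι ι K} (hA : Aᵀ = -A) (z : ι → K) : z ⬝ᵥ A *ᵥ z = 0 := by
  rw [← self_eq_neg]
  calc z ⬝ᵥ A *ᵥ z = z ⬝ᵥ Aᵀ *ᵥ z := by
        rw [mulVec_transpose, dotProduct_mulVec, dotProduct_comm]
    _ = -(z ⬝ᵥ A *ᵥ z) := by rw [hA, neg_mulVec, dotProduct_neg]

theorem vecMul_contractFirstThird_eq_zero [Fintype ι] [CommRing K] [IsAddTorsionFree K]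
    {T : ι → ι → ι → ι → K} (hT : ∀ i k l j, T k i l j = -T i k l j) (z : ι → K) :
    z ᵥ* contractFirstThird z T = 0 := by
  ext j
  have slice_vanishes (l : ι) : z ⬝ᵥ (of fun i k ↦ T k i l j) *ᵥ z = 0 :=
    dotProduct_mulVec_self_eq_zero_of_transpose_eq_neg (by ext i k; exact hT k i l j) z
  calc (z ᵥ* contractFirstThird z T) j
      = ∑ i, ∑ k, ∑ l, z l * (z i * (T k i l j * z k)) := by
        simp only [vecMul, dotProduct, contractFirstThird, of_apply, Finset.mul_sum]
        congr! 3
        ring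
    _ = ∑ l, z l * (z ⬝ᵥ (of fun i k ↦ T k i l j) *ᵥ z) := by
        simp only [dotProduct, mulVec, of_apply, Finset.mul_sum]
        rw [Finset.sum_comm_cycle]
    _ = 0 := by simp only [slice_vanishes, mul_zero, Finset.sum_const_zero]

theorem add_one_div_sub_one_ne_zero [Field K] [CharZero K] {n : ℕ} (hn : n ≠ 1) :
    ((n : K) + 1) / ((n : K) - 1) ≠ 0 :=
  div_ne_zero n.cast_add_one_ne_zero (sub_ne_zero.mpr (Nat.cast_ne_one.mpr hn))

end TypeDWeyl

open TypeDWeyl Matrix in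
theorem typeD_two_WANDs_general {ι K : Type*} [Fintype ι] [DecidableEq ι] [Nontrivial ι]
    [Field K] [LinearOrder K] [IsStrictOrderedRing K] {c : K} (hc : c ≠ 0)
    {z : ι → K} {T : ι → ι → ι → ι → K} (hT : ∀ i k l j, T k i l j = -T i k l j)
    (heq : ∀ i j,
      c * (z i * z j - ((∑ k, z k ^ 2) / Fintype.card ι) * (if i = j then 1 else 0))
        = -∑ k, ∑ l, z k * z l * T k i l j) :
    z = 0 := by
  have matrix_eq : c • traceFreeSquare z = -contractFirstThird z T := by
    ext i j
    simpa [traceFreeSquare, contractFirstThird, vecMulVec_apply, dotProduct, one_apply, sq]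
      using heq i j
  have contracted : c • (z ᵥ* traceFreeSquare z) = 0 := by
    rw [← vecMul_smul, matrix_eq, vecMul_neg, vecMul_contractFirstThird_eq_zero hT, neg_zero]
  exact eq_zero_of_vecMul_traceFreeSquare_eq_zero ((smul_eq_zero_iff_right hc).mp contracted)

/-- The contraction argument for multiple WANDs: if `Φ ≠ 0`, `T` is antisymmetric
in its first and second slots (`T k i l j = - T i k l j`), and
`((m+1)/(m-1)) Φ (z_i z_j - (|z|²/m) δ_{ij}) = - ∑_{k,l} z_k z_l T_{kilj}`
for all `i, j`, then `z = 0`. -/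
theorem typeD_two_WANDs (m : ℕ) (hm : 2 ≤ m) (Φ : ℝ) (hΦ : Φ ≠ 0)
    (z : Fin m → ℝ) (T : Fin m → Fin m → Fin m → Fin m → ℝ)
    (hT : ∀ i k l j : Fin m, T k i l j = - T i k l j)
    (heq : ∀ i j : Fin m,
      (((m : ℝ) + 1) / ((m : ℝ) - 1)) * Φ *
          (z i * z j - ((∑ k, (z k) ^ 2) / (m : ℝ)) * (if i = j then (1 : ℝ) else 0))
        = - ∑ k, ∑ l, z k * z l * T k i l j) :
    z = 0 := by
  have : Nontrivial (Fin m) := Fin.nontrivial_iff_two_le.mpr hm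
  exact typeD_two_WANDs_general
    (mul_ne_zero (TypeDWeyl.add_one_div_sub_one_ne_zero (Nat.ne_of_gt hm)) hΦ) hT
    (by simpa using heq)
end
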